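/- arXiv:1007.1575 — 2 statements merged into one kernel-verified Lean document; each statement's English description precedes it below -/
import Mathlib

section
/- For any two orthogonal projections P, Q on H, one has ρ(P,Q) < π/2 if and only if ‖P − Q‖ < 1; moreover, if ‖P − Q‖ < 1 then ρ(P,Q) = arcsin(‖P − Q‖). -/
open ContinuousLinearMap
open scoped ENNReal

/-- `P` is an orthogonal projection: `P = P* = P²`. -/
def IsOrthogonalProjection {H : Type*} [NormedAddCommGroup H] [InnerProductSpace ℂ H]
    [CompleteSpace H] (P : H →L[ℂ] H) : Prop :=
  IsSelfAdjoint P ∧ P * P = P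

/-- A map `γ` is a piecewise `C¹`-smooth path on `[a,b]` if there is a partition
`a = t₀ < … < t_n = b` such that `γ` is `C¹`-smooth on each `[t_j, t_{j+1}]`. -/
def PiecewiseC1On {E : Type*} [NormedAddCommGroup E] [NormedSpace ℝ E]
    (γ : ℝ → E) (a b : ℝ) : Prop :=
  ∃ (n : ℕ) (t : ℕ → ℝ), t 0 = a ∧ t n = b ∧ (∀ i < n, t i < t (i + 1)) ∧
    ∀ i < n, ContDiffOn ℝ 1 γ (Set.Icc (t i) (t (i + 1)))

/-- The length (inner) metric `ρ` on the set of orthogonal projections: the infimum of the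
lengths (total variations) of continuous paths of orthogonal projections joining `P` to `Q`
(parametrized by `[0,1]`), with value `∞` if there is no such path. -/
noncomputable def projLengthMetric {H : Type*} [NormedAddCommGroup H] [InnerProductSpace ℂ H]
    [CompleteSpace H] (P Q : H →L[ℂ] H) : ℝ≥0∞ :=
  ⨅ (γ : ℝ → (H →L[ℂ] H)) (_ : ContinuousOn γ (Set.Icc (0:ℝ) 1))
    (_ : ∀ t ∈ Set.Icc (0:ℝ) 1, IsOrthogonalProjection (γ t))
    (_ : γ 0 = P) (_ : γ 1 = Q), eVariationOn γ (Set.Icc (0:ℝ) 1)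

/-!
Write `S = 2P - 1` for the symmetry attached to a projection `P`, so that `‖S - T‖ = 2‖P - Q‖`.

Lower bound: two unit vectors at distance `c` make the angle `2 arcsin (c / 2)`, so the triangle
inequality for angles, applied to `S x`, `T x`, `R x` for all unit vectors `x`, shows that
`arcsin ‖P - Q‖` is a metric on projections. It agrees with `‖P - Q‖` to first order, and such a
metric is bounded by the length of any path.

Upper bound: if `‖P - Q‖ < 1` then `T S = exp (i K)` with `‖K‖ = 2 arcsin ‖P - Q‖`. Since `S`
conjugates `T S` to its inverse, it anticommutes with `K`, so every `exp (i r K) S` is again a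
symmetry; these form a path from `S` to `T` with Lipschitz constant `‖K‖`.
-/

section Trigonometry

open Real Filter
open scoped Topology

theorem arccos_one_sub_sq_div_two {x : ℝ} (hx₀ : 0 ≤ x) (hx₂ : x ≤ 2) :
    arccos (1 - x ^ 2 / 2) = 2 * arcsin (x / 2) := by
  refine arccos_eq_of_eq_cos ?_ ?_ ?_
  · linarith [arcsin_nonneg.2 (div_nonneg hx₀ zero_le_two)]
  · linarith [arcsin_le_pi_div_two (x / 2)]
  · rw [cos_two_mul, cos_sq', sin_arcsin (by linarith) (by linarith)]
    ring

theorem exists_arcsin_le_mul {C : ℝ} (hC : 1 < C) :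
    ∃ ε > 0, ∀ x, 0 ≤ x → x < ε → arcsin x ≤ C * x := by
  have hderiv : HasDerivAt arcsin 1 0 := by
    simpa using hasDerivAt_arcsin (x := 0) (by norm_num) (by norm_num)
  obtain ⟨ε, hε, hbound⟩ :=
    Metric.eventually_nhds_iff.1 (hderiv.isLittleO.bound (sub_pos.2 hC))
  refine ⟨ε, hε, fun x hx₀ hxε => ?_⟩
  have hx := hbound (y := x) (by simpa [abs_of_nonneg hx₀] using hxε)
  simp only [arcsin_zero, sub_zero, smul_eq_mul, mul_one, norm_eq_abs, abs_of_nonneg hx₀] at hx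
  linarith [le_of_abs_le hx]

end Trigonometry

section Length

open Set Filter
open scoped Topology NNReal

variable {α : Type*} [PseudoEMetricSpace α] {δ : α → α → ℝ≥0∞} {s : Set α} {γ : ℝ → α} {a b : ℝ}

theorem exists_monotone_edist_lt_of_continuousOn (hab : a ≤ b) (hγ : ContinuousOn γ (Icc a b))
    {r : ℝ≥0∞} (hr : 0 < r) :
    ∃ (t : ℕ → ℝ) (n : ℕ), Monotone t ∧ (∀ i, t i ∈ Icc a b) ∧ t 0 = a ∧ t n = b ∧
      ∀ i, edist (γ (t i)) (γ (t (i + 1))) < r := by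
  have hcont : Continuous fun x : Icc a b => γ x := hγ.domRestrict
  obtain ⟨t, ht₀, hmono, ⟨n, hn⟩, hcover⟩ := exists_monotone_Icc_subset_open_cover_Icc hab
    (c := fun z : α => {x | γ x ∈ Metric.eball z (r / 2)})
    (fun z => Metric.isOpen_eball.preimage hcont)
    (fun x _ => mem_iUnion.2 ⟨γ x, Metric.mem_eball_self (ENNReal.half_pos hr.ne')⟩)
  refine ⟨fun i => t i, n, hmono, fun i => (t i).2, by simp only [ht₀],
    by simp only [hn n le_rfl], fun i => ?_⟩
  obtain ⟨z, hz⟩ := hcover i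
  have hle : t i ≤ t (i + 1) := hmono i.le_succ
  calc edist (γ (t i)) (γ (t (i + 1)))
      ≤ edist (γ (t i)) z + edist (γ (t (i + 1))) z := edist_triangle_right _ _ _
    _ < r / 2 + r / 2 := ENNReal.add_lt_add (hz (left_mem_Icc.2 hle)) (hz (right_mem_Icc.2 hle))
    _ = r := ENNReal.add_halves r

theorem le_mul_eVariationOn_of_le_mul_edist
    (htri : ∀ x ∈ s, ∀ y ∈ s, ∀ z ∈ s, δ x z ≤ δ x y + δ y z) {C r : ℝ≥0∞} (hr : 0 < r)
    (hδ : ∀ x ∈ s, ∀ y ∈ s, edist x y < r → δ x y ≤ C * edist x y)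
    (hab : a ≤ b) (hγ : ContinuousOn γ (Icc a b)) (hs : MapsTo γ (Icc a b) s) :
    δ (γ a) (γ b) ≤ C * eVariationOn γ (Icc a b) := by
  obtain ⟨t, n, hmono, hmem, ht₀, htn, hclose⟩ :=
    exists_monotone_edist_lt_of_continuousOn hab hγ hr
  have hts (i : ℕ) : γ (t i) ∈ s := hs (hmem i)
  have hsum (k : ℕ) : δ (γ (t 0)) (γ (t k)) ≤
      ∑ i ∈ Finset.range k, C * edist (γ (t i)) (γ (t (i + 1))) := by
    induction k with
    | zero => simpa [hr] using hδ _ (hts 0) _ (hts 0)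
    | succ k ih =>
      rw [Finset.sum_range_succ]
      exact (htri _ (hts 0) _ (hts k) _ (hts (k + 1))).trans
        (add_le_add ih (hδ _ (hts k) _ (hts (k + 1)) (hclose k)))
  calc δ (γ a) (γ b)
      ≤ ∑ i ∈ Finset.range n, C * edist (γ (t i)) (γ (t (i + 1))) := by
        simpa only [ht₀, htn] using hsum n
    _ = C * ∑ i ∈ Finset.range n, edist (γ (t (i + 1))) (γ (t i)) := by
        simp only [Finset.mul_sum, edist_comm]
    _ ≤ C * eVariationOn γ (Icc a b) := by
        gcongr
        exact eVariationOn.sum_le hmono hmem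

theorem le_eVariationOn_of_forall_one_lt_le_mul_edist
    (htri : ∀ x ∈ s, ∀ y ∈ s, ∀ z ∈ s, δ x z ≤ δ x y + δ y z)
    (hδ : ∀ C : ℝ≥0, 1 < C → ∃ r > 0, ∀ x ∈ s, ∀ y ∈ s, edist x y < r → δ x y ≤ C * edist x y)
    (hab : a ≤ b) (hγ : ContinuousOn γ (Icc a b)) (hs : MapsTo γ (Icc a b) s) :
    δ (γ a) (γ b) ≤ eVariationOn γ (Icc a b) := by
  have hlim : Tendsto (fun C : ℝ≥0 => (C : ℝ≥0∞) * eVariationOn γ (Icc a b)) (𝓝[>] 1)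
      (𝓝 (eVariationOn γ (Icc a b))) := by
    simpa using ENNReal.Tendsto.mul_const
      (ENNReal.tendsto_coe.2 (tendsto_nhdsWithin_of_tendsto_nhds tendsto_id))
      (Or.inl (ENNReal.coe_ne_zero.2 one_ne_zero))
  refine ge_of_tendsto hlim (eventually_mem_nhdsWithin.mono fun C hC => ?_)
  obtain ⟨r, hr, hδC⟩ := hδ C hC
  exact le_mul_eVariationOn_of_le_mul_edist htri hr hδC hab hγ hs

theorem eVariationOn_le_of_lipschitzWith {K : ℝ≥0} (hγ : LipschitzWith K γ) :
    eVariationOn γ (Icc a b) ≤ K * ENNReal.ofReal (b - a) := by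
  rw [← eVariationOn_id_Icc a b]
  exact hγ.lipschitzOnWith.comp_eVariationOn_le (mapsTo_univ _ _)

end Length

section Angle

open Real InnerProductGeometry

theorem angle_eq_two_mul_arcsin_norm_sub_div_two {E : Type*} [NormedAddCommGroup E]
    [InnerProductSpace ℝ E] {x y : E} (hx : ‖x‖ = 1) (hy : ‖y‖ = 1) :
    angle x y = 2 * arcsin (‖x - y‖ / 2) := by
  have hle : ‖x - y‖ ≤ 2 := (norm_sub_le x y).trans (by rw [hx, hy]; norm_num)
  have hinner : inner ℝ x y = 1 - ‖x - y‖ ^ 2 / 2 := by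
    rw [norm_sub_sq_real, hx, hy]
    ring
  rw [angle, hx, hy, mul_one, div_one, hinner, arccos_one_sub_sq_div_two (norm_nonneg _) hle]

theorem arcsin_norm_sub_div_two_le_add {E : Type*} [NormedAddCommGroup E] [InnerProductSpace ℝ E]
    {x y z : E} (hx : ‖x‖ = 1) (hy : ‖y‖ = 1) (hz : ‖z‖ = 1) :
    arcsin (‖x - z‖ / 2) ≤ arcsin (‖x - y‖ / 2) + arcsin (‖y - z‖ / 2) := by
  have htri := angle_le_angle_add_angle x y z
  rw [angle_eq_two_mul_arcsin_norm_sub_div_two hx hz,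
    angle_eq_two_mul_arcsin_norm_sub_div_two hx hy,
    angle_eq_two_mul_arcsin_norm_sub_div_two hy hz] at htri
  linarith

theorem arcsin_opNorm_sub_div_two_le_add {𝕜 E F : Type*} [RCLike 𝕜] [NormedAddCommGroup E]
    [NormedSpace 𝕜 E] [NormedAddCommGroup F] [InnerProductSpace 𝕜 F] {U V W : E →L[𝕜] F}
    (hU : ∀ x, ‖U x‖ = ‖x‖) (hV : ∀ x, ‖V x‖ = ‖x‖) (hW : ∀ x, ‖W x‖ = ‖x‖) :
    arcsin (‖U - W‖ / 2) ≤ arcsin (‖U - V‖ / 2) + arcsin (‖V - W‖ / 2) := by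
  let := InnerProductSpace.rclikeToReal 𝕜 F
  set θ := arcsin (‖U - V‖ / 2) + arcsin (‖V - W‖ / 2)
  have hθ₀ : 0 ≤ θ := add_nonneg (arcsin_nonneg.2 (by positivity)) (arcsin_nonneg.2 (by positivity))
  obtain hlarge | hsmall := le_or_gt (π / 2) θ
  · exact (arcsin_le_pi_div_two _).trans hlarge
  have hmem : θ ∈ Set.Ico (-(π / 2)) (π / 2) := ⟨by linarith, hsmall⟩
  have hunit (x : E) (hx : ‖x‖ = 1) : ‖(U - W) x‖ ≤ 2 * sin θ := by
    have hangle : arcsin (‖U x - W x‖ / 2) ≤ θ := calc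
      arcsin (‖U x - W x‖ / 2)
        ≤ arcsin (‖(U - V) x‖ / 2) + arcsin (‖(V - W) x‖ / 2) :=
          arcsin_norm_sub_div_two_le_add ((hU x).trans hx) ((hV x).trans hx) ((hW x).trans hx)
      _ ≤ arcsin (‖U - V‖ / 2) + arcsin (‖V - W‖ / 2) := by
          gcongr <;> exact unit_le_opNorm _ x hx.le
    have hsin : ‖U x - W x‖ / 2 ≤ sin θ := (arcsin_le_iff_le_sin' hmem).1 hangle
    rw [sub_apply]
    linarith
  have hnorm : ‖U - W‖ ≤ 2 * sin θ := opNorm_le_of_unit_norm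
    (mul_nonneg zero_le_two (sin_nonneg_of_nonneg_of_le_pi hθ₀ (by linarith))) hunit
  exact (arcsin_le_iff_le_sin' hmem).2 (by linarith)

end Angle

section Symmetry

variable (𝕜 : Type*) [RCLike 𝕜]

theorem norm_two_mul_sub_one_sub {A : Type*} [NormedRing A] [NormedAlgebra 𝕜 A] (p q : A) :
    ‖(2 * p - 1) - (2 * q - 1)‖ = 2 * ‖p - q‖ := by
  rw [sub_sub_sub_cancel_right, ← mul_sub, two_mul, ← two_nsmul, RCLike.norm_nsmul 𝕜, two_nsmul,
    two_mul]

theorem isStarProjection_half_smul_one_add {A : Type*} [Ring A] [StarRing A] [Algebra ℂ A]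
    [StarModule ℂ A] {s : unitary A} (hs : s * s = 1) :
    IsStarProjection ((2⁻¹ : ℂ) • (1 + (s : A))) where
  isIdempotentElem := by
    have hs' : (s * s : A) = 1 := congrArg Subtype.val hs
    simp only [IsIdempotentElem, smul_mul_assoc, mul_smul_comm, add_mul, mul_add, one_mul, mul_one,
      hs']
    module
  isSelfAdjoint := by
    have hs' : star s = s := by
      rw [Unitary.star_eq_inv, inv_eq_of_mul_eq_one_left hs]
    have : IsSelfAdjoint (s : A) := congrArg Subtype.val hs'
    exact IsSelfAdjoint.smul (by simp [isSelfAdjoint_iff]) ((IsSelfAdjoint.one A).add this)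

theorem two_mul_sub_one_mul_self {A : Type*} [Ring A] {p : A} (hp : IsIdempotentElem p) :
    (2 * p - 1) * (2 * p - 1) = 1 := by
  noncomm_ring
  rw [hp.eq]
  abel

theorem arcsin_norm_sub_le_add {H : Type*} [NormedAddCommGroup H]
    [InnerProductSpace 𝕜 H] [CompleteSpace H] {P Q R : H →L[𝕜] H} (hP : IsStarProjection P)
    (hQ : IsStarProjection Q) (hR : IsStarProjection R) :
    Real.arcsin ‖P - R‖ ≤ Real.arcsin ‖P - Q‖ + Real.arcsin ‖Q - R‖ := by
  have htri := arcsin_opNorm_sub_div_two_le_add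
    (norm_map_of_mem_unitary hP.two_mul_sub_one_mem_unitary)
    (norm_map_of_mem_unitary hQ.two_mul_sub_one_mem_unitary)
    (norm_map_of_mem_unitary hR.two_mul_sub_one_mem_unitary)
  simpa only [norm_two_mul_sub_one_sub 𝕜, mul_div_cancel_left₀ _ (two_ne_zero' ℝ)] using htri

end Symmetry

section Geodesic

open selfAdjoint Unitary
open scoped NNReal

variable {A : Type*} [CStarAlgebra A]

theorem expUnitary_neg (x : selfAdjoint A) : expUnitary (-x) = (expUnitary x)⁻¹ := by
  refine eq_inv_of_mul_eq_one_left ?_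
  rw [← Commute.expUnitary_add (by simp), neg_add_cancel, expUnitary_zero]

theorem expUnitary_conjugate (u : unitary A) (x : selfAdjoint A) :
    expUnitary ⟨(u : A) * (x : A) * star (u : A), x.2.conjugate (u : A)⟩ =
      u * expUnitary x * u⁻¹ := by
  let +nondep : NormedAlgebra ℚ A := .restrictScalars ℚ ℂ A
  ext
  simpa [mul_assoc, ← star_eq_inv] using
    NormedSpace.exp_units_conj (Unitary.toUnits u) (Complex.I • (x : A))

theorem argSelfAdjoint_eq_of_expUnitary_eq {u : unitary A} {x : selfAdjoint A} (hx : ‖x‖ < Real.pi)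
    (h : expUnitary x = u) : argSelfAdjoint u = x := by
  rw [← h, argSelfAdjoint_expUnitary hx]

theorem norm_expUnitary_sub_one_le (x : selfAdjoint A) : ‖(expUnitary x - 1 : A)‖ ≤ ‖x‖ := by
  obtain hx | hx := le_total ‖x‖ Real.pi
  · refine le_of_sq_le_sq ?_ (norm_nonneg x)
    rw [norm_sq_expUnitary_sub_one hx]
    linarith [Real.one_sub_sq_div_two_le_cos (x := ‖x‖)]
  · nontriviality A
    calc ‖(expUnitary x - 1 : A)‖
        ≤ ‖(expUnitary x : A)‖ + ‖(1 : A)‖ := norm_sub_le _ _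
      _ = 2 := by rw [CStarRing.norm_coe_unitary, CStarRing.norm_one, one_add_one_eq_two]
      _ ≤ ‖x‖ := Real.two_le_pi.trans hx

theorem norm_argSelfAdjoint_eq_two_mul_arcsin {u : unitary A} (hu : ‖(u - 1 : A)‖ < 2) :
    ‖argSelfAdjoint u‖ = 2 * Real.arcsin (‖(u - 1 : A)‖ / 2) := by
  rw [norm_argSelfAdjoint hu, arccos_one_sub_sq_div_two (norm_nonneg _) hu.le]

theorem conj_expUnitary_smul_argSelfAdjoint {u w : unitary A} (hw : ‖(w - 1 : A)‖ < 2)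
    (h : u * w * u⁻¹ = w⁻¹) (r : ℝ) :
    u * expUnitary (r • argSelfAdjoint w) * u⁻¹ = (expUnitary (r • argSelfAdjoint w))⁻¹ := by
  set x := argSelfAdjoint w
  let y : selfAdjoint A := ⟨(u : A) * (x : A) * star (u : A), x.2.conjugate (u : A)⟩
  have hx : ‖x‖ < Real.pi := by
    rw [norm_argSelfAdjoint_eq_two_mul_arcsin hw]
    linarith [Real.arcsin_lt_pi_div_two.2 ((div_lt_one two_pos).2 hw)]
  have hexp : expUnitary x = w := expUnitary_argSelfAdjoint hw
  have hy : ‖y‖ < Real.pi := by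
    have : ‖y‖ = ‖x‖ := calc
      ‖y‖ = ‖(u : A) * (x : A) * (star u : unitary A)‖ := rfl
      _ = ‖x‖ := by rw [CStarRing.norm_mul_coe_unitary, CStarRing.norm_coe_unitary_mul]; rfl
    rwa [this]
  -- `y` and `-x` are logarithms of `w⁻¹` of norm less than `π`.
  have hxy : y = -x := by
    rw [← argSelfAdjoint_eq_of_expUnitary_eq hy rfl,
      ← argSelfAdjoint_eq_of_expUnitary_eq (x := -x) ((norm_neg x).trans_lt hx) rfl,
      expUnitary_conjugate, expUnitary_neg, hexp, h]
  have hr : r • y = ⟨(u : A) * (r • x : selfAdjoint A) * star (u : A),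
      (r • x).2.conjugate (u : A)⟩ := by
    ext
    simp [y]
  rw [← expUnitary_conjugate, ← hr, hxy, smul_neg, expUnitary_neg]

/-- The curve `r ↦ exp (i r K) u` in the unitary group, where `K` is the principal logarithm of
`v u⁻¹`. For `‖v - u‖ < 2` it is a path of shortest length from `u` (at `r = 0`) to `v`
(at `r = 1`). -/
noncomputable def unitaryGeodesic (u v : unitary A) (r : ℝ) : unitary A :=
  expUnitary (r • argSelfAdjoint (v * u⁻¹)) * u

variable {u v : unitary A}

variable (u v) in
theorem unitaryGeodesic_zero : unitaryGeodesic u v 0 = u := by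
  rw [unitaryGeodesic, zero_smul, expUnitary_zero, one_mul]

variable (u v) in
theorem norm_mul_inv_sub_one : ‖((v * u⁻¹ : unitary A) - 1 : A)‖ = ‖(v - u : A)‖ := by
  rw [← star_eq_inv, norm_sub_eq]

theorem unitaryGeodesic_one (huv : ‖(v - u : A)‖ < 2) : unitaryGeodesic u v 1 = v := by
  rw [← norm_mul_inv_sub_one] at huv
  rw [unitaryGeodesic, one_smul, expUnitary_argSelfAdjoint huv, inv_mul_cancel_right]

theorem dist_expUnitary_smul_le (x : selfAdjoint A) (a b : ℝ) :
    dist (expUnitary (a • x)) (expUnitary (b • x)) ≤ ‖x‖ * dist a b := by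
  have hmul : expUnitary (a • x) * star (expUnitary (b • x)) = expUnitary ((a - b) • x) := by
    rw [star_eq_inv, ← expUnitary_neg, ← Commute.expUnitary_add, sub_smul, sub_eq_add_neg]
    simpa using ((Commute.refl (x : A)).smul_left a).smul_right b
  calc dist (expUnitary (a • x)) (expUnitary (b • x))
      = ‖(expUnitary ((a - b) • x) - 1 : A)‖ := by
        rw [Subtype.dist_eq, dist_eq_norm, norm_sub_eq, hmul]
    _ ≤ ‖(a - b) • x‖ := norm_expUnitary_sub_one_le _
    _ = ‖x‖ * dist a b := by rw [norm_smul, mul_comm, Real.norm_eq_abs, Real.dist_eq]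

theorem lipschitzWith_unitaryGeodesic (huv : ‖(v - u : A)‖ < 2) :
    LipschitzWith (2 * Real.arcsin (‖(v - u : A)‖ / 2)).toNNReal (unitaryGeodesic u v) := by
  rw [← norm_mul_inv_sub_one] at huv ⊢
  rw [← norm_argSelfAdjoint_eq_two_mul_arcsin huv]
  refine LipschitzWith.of_dist_le' fun a b => ?_
  calc dist (unitaryGeodesic u v a) (unitaryGeodesic u v b)
      = dist (expUnitary (a • argSelfAdjoint (v * u⁻¹)))
          (expUnitary (b • argSelfAdjoint (v * u⁻¹))) := by
        simp only [unitaryGeodesic, Subtype.dist_eq, dist_eq_norm, Submonoid.coe_mul, ← sub_mul,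
          CStarRing.norm_mul_coe_unitary]
    _ ≤ ‖argSelfAdjoint (v * u⁻¹)‖ * dist a b := dist_expUnitary_smul_le _ a b

theorem unitaryGeodesic_mul_self (hu : u * u = 1) (hv : v * v = 1) (huv : ‖(v - u : A)‖ < 2)
    (r : ℝ) : unitaryGeodesic u v r * unitaryGeodesic u v r = 1 := by
  have hu' : u⁻¹ = u := inv_eq_of_mul_eq_one_left hu
  have hv' : v⁻¹ = v := inv_eq_of_mul_eq_one_left hv
  rw [← norm_mul_inv_sub_one] at huv
  have hinv : u * (v * u⁻¹) * u⁻¹ = (v * u⁻¹)⁻¹ := by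
    rw [mul_inv_rev, inv_inv, hv', mul_assoc, mul_assoc, hu', hu, mul_one]
  have hconj := conj_expUnitary_smul_argSelfAdjoint huv hinv r
  rw [hu'] at hconj
  rw [unitaryGeodesic, hu', mul_assoc, ← mul_assoc u, hconj, mul_inv_cancel]

end Geodesic

section Projection

variable {A H : Type*} [CStarAlgebra A] [NormedAddCommGroup H] [InnerProductSpace ℂ H]
  [CompleteSpace H] {P Q : H →L[ℂ] H}

theorem exists_lipschitzWith_isStarProjection {p q : A} (hp : IsStarProjection p)
    (hq : IsStarProjection q) (hpq : ‖p - q‖ < 1) :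
    ∃ γ : ℝ → A, (∀ r, IsStarProjection (γ r)) ∧ γ 0 = p ∧ γ 1 = q ∧
      LipschitzWith (Real.arcsin ‖p - q‖).toNNReal γ := by
  let s : unitary A := ⟨2 * p - 1, hp.two_mul_sub_one_mem_unitary⟩
  let t : unitary A := ⟨2 * q - 1, hq.two_mul_sub_one_mem_unitary⟩
  have hs : s * s = 1 := Subtype.ext (two_mul_sub_one_mul_self hp.isIdempotentElem)
  have ht : t * t = 1 := Subtype.ext (two_mul_sub_one_mul_self hq.isIdempotentElem)
  have hnorm : ‖(t - s : A)‖ = 2 * ‖p - q‖ := by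
    rw [norm_sub_rev p, ← norm_two_mul_sub_one_sub ℂ]
  have hts : ‖(t - s : A)‖ < 2 := by linarith
  refine ⟨fun r => (2⁻¹ : ℂ) • (1 + (unitaryGeodesic s t r : A)),
    fun r => isStarProjection_half_smul_one_add (unitaryGeodesic_mul_self hs ht hts r), ?_, ?_,
    LipschitzWith.of_dist_le' fun a b => ?_⟩
  · simp only [unitaryGeodesic_zero, s, two_mul]
    module
  · simp only [unitaryGeodesic_one hts]
    simp only [t, two_mul]
    module
  · have hlip := (lipschitzWith_unitaryGeodesic hts).dist_le_mul a b
    rw [hnorm, mul_div_cancel_left₀ _ two_ne_zero, Real.coe_toNNReal _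
      (mul_nonneg zero_le_two (Real.arcsin_nonneg.2 (norm_nonneg _)))] at hlip
    rw [dist_smul₀, dist_add_left, ← Subtype.dist_eq, norm_inv, Complex.norm_ofNat]
    linarith

theorem isOrthogonalProjection_iff_isStarProjection :
    IsOrthogonalProjection P ↔ IsStarProjection P :=
  ⟨fun h => ⟨h.2, h.1⟩, fun h => ⟨h.isSelfAdjoint, h.isIdempotentElem⟩⟩

theorem ofReal_arcsin_norm_sub_le_projLengthMetric (P Q : H →L[ℂ] H) :
    ENNReal.ofReal (Real.arcsin ‖P - Q‖) ≤ projLengthMetric P Q := by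
  simp only [projLengthMetric, isOrthogonalProjection_iff_isStarProjection]
  refine le_iInf₂ fun γ hγ => le_iInf₂ fun hproj hP => le_iInf fun hQ => ?_
  rw [← hP, ← hQ]
  refine le_eVariationOn_of_forall_one_lt_le_mul_edist
    (δ := fun P Q : H →L[ℂ] H => ENNReal.ofReal (Real.arcsin ‖P - Q‖))
    (s := {P | IsStarProjection P})
    (fun P hP Q hQ R hR => ?_) (fun C hC => ?_) zero_le_one hγ hproj
  · rw [← ENNReal.ofReal_add (Real.arcsin_nonneg.2 (norm_nonneg _))
      (Real.arcsin_nonneg.2 (norm_nonneg _))]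
    exact ENNReal.ofReal_le_ofReal (arcsin_norm_sub_le_add ℂ hP hQ hR)
  · obtain ⟨ε, hε, harcsin⟩ := exists_arcsin_le_mul (C := C) (by exact_mod_cast hC)
    refine ⟨ENNReal.ofReal ε, ENNReal.ofReal_pos.2 hε, fun P _ Q _ hPQ => ?_⟩
    rw [edist_dist, dist_eq_norm] at hPQ ⊢
    rw [← ENNReal.ofReal_coe_nnreal, ← ENNReal.ofReal_mul C.coe_nonneg]
    exact ENNReal.ofReal_le_ofReal
      (harcsin _ (norm_nonneg _) ((ENNReal.ofReal_lt_ofReal_iff hε).1 hPQ))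

theorem projLengthMetric_le_ofReal_arcsin_norm_sub (hP : IsOrthogonalProjection P)
    (hQ : IsOrthogonalProjection Q) (hPQ : ‖P - Q‖ < 1) :
    projLengthMetric P Q ≤ ENNReal.ofReal (Real.arcsin ‖P - Q‖) := by
  rw [isOrthogonalProjection_iff_isStarProjection] at hP hQ
  obtain ⟨γ, hproj, hγ₀, hγ₁, hlip⟩ := exists_lipschitzWith_isStarProjection hP hQ hPQ
  calc projLengthMetric P Q
      ≤ eVariationOn γ (Set.Icc 0 1) :=
        iInf₂_le_of_le γ hlip.continuous.continuousOn <|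
          iInf₂_le_of_le (fun t _ => isOrthogonalProjection_iff_isStarProjection.2 (hproj t)) hγ₀ <|
            iInf_le _ hγ₁
    _ ≤ ENNReal.ofReal (Real.arcsin ‖P - Q‖) := by
        simpa using! eVariationOn_le_of_lipschitzWith (a := 0) (b := 1) hlip

end Projection

theorem projLengthMetric_lt_pi_div_two_iff_general {H : Type*} [NormedAddCommGroup H]
    [InnerProductSpace ℂ H] [CompleteSpace H] (P Q : H →L[ℂ] H)
    (hP : IsOrthogonalProjection P) (hQ : IsOrthogonalProjection Q) :
    (projLengthMetric P Q < ENNReal.ofReal (Real.pi / 2) ↔ ‖P - Q‖ < 1) ∧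
      (‖P - Q‖ < 1 →
        projLengthMetric P Q = ENNReal.ofReal (Real.arcsin ‖P - Q‖)) := by
  have hlower := ofReal_arcsin_norm_sub_le_projLengthMetric P Q
  have hupper := projLengthMetric_le_ofReal_arcsin_norm_sub hP hQ
  have hlt : ENNReal.ofReal (Real.arcsin ‖P - Q‖) < ENNReal.ofReal (Real.pi / 2) ↔ ‖P - Q‖ < 1 := by
    rw [ENNReal.ofReal_lt_ofReal_iff Real.pi_div_two_pos, Real.arcsin_lt_pi_div_two]
  exact ⟨⟨fun h => hlt.1 (hlower.trans_lt h), fun h => (hupper h).trans_lt (hlt.2 h)⟩,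
    fun h => (hupper h).antisymm hlower⟩

/-- For orthogonal projections `P, Q`: `ρ(P,Q) < π/2 ↔ ‖P − Q‖ < 1`, and if
`‖P − Q‖ < 1` then `ρ(P,Q) = arcsin ‖P − Q‖`. -/
theorem projLengthMetric_lt_pi_div_two_iff {H : Type*} [NormedAddCommGroup H]
    [InnerProductSpace ℂ H] [CompleteSpace H] [TopologicalSpace.SeparableSpace H]
    (P Q : H →L[ℂ] H)
    (hP : IsOrthogonalProjection P) (hQ : IsOrthogonalProjection Q) :
    (projLengthMetric P Q < ENNReal.ofReal (Real.pi / 2) ↔ ‖P - Q‖ < 1) ∧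
      (‖P - Q‖ < 1 →
        projLengthMetric P Q = ENNReal.ofReal (Real.arcsin ‖P - Q‖)) :=
  projLengthMetric_lt_pi_div_two_iff_general P Q hP hQ
end

section
/- For any two orthogonal projections P, Q on H, the length metric equals the Riemannian pseudometric: ρ(P,Q) = inf { ∫_a^b ‖γ'(t)‖ dt : γ : [a,b] → 𝒫 a piecewise C¹-smooth path with γ(a) = P and γ(b) = Q }, where the infimum of the empty set is ∞. -/
open ContinuousLinearMap
open scoped ENNReal

/-!
The variation of a piecewise `C¹` path `γ` is at most `∫ ‖γ'‖`, so the length metric is the smaller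
of the two. Conversely, let `p` and `q` be projections with `‖p - q‖ < 1`. Their reflections
`s = 2p - 1` and `r = 2q - 1` satisfy `‖r s - 1‖ = 2 ‖p - q‖ < 2`, so the unitary `r s` has a
logarithm `i h` with `‖h‖ = 2 arcsin ‖p - q‖`. As `s (r s) s = (r s)⁻¹`, also `s h s = -h`, whence
every `exp (i t h) s` is again a reflection, and the smooth path `(1 + exp (i t h) s) / 2` of
projections joins `p` to `q` with length `arcsin ‖p - q‖`. Replacing a continuous path by such
geodesics between the points of a fine subdivision changes the length by a factor close to `1`,
because `arcsin d / d → 1` as `d → 0`.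
-/

open Set MeasureTheory

theorem eVariationOn_le_measure {α E : Type*} [PseudoEMetricSpace E] [LinearOrder α]
    [TopologicalSpace α] [OrderClosedTopology α] [MeasurableSpace α] [OpensMeasurableSpace α]
    {f : α → E} {s : Set α} [s.OrdConnected] {μ : Measure α}
    (h : ∀ x ∈ s, ∀ y ∈ s, x ≤ y → edist (f x) (f y) ≤ μ (Ioc x y)) :
    eVariationOn f s ≤ μ s := by
  refine iSup_le fun ⟨n, u, hu, hus⟩ ↦ ?_
  calc ∑ i ∈ Finset.range n, edist (f (u (i + 1))) (f (u i))
      ≤ ∑ i ∈ Finset.range n, μ (Ioc (u i) (u (i + 1))) := by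
        gcongr with i
        exact edist_comm (f (u i)) _ ▸ h _ (hus i) _ (hus (i + 1)) (hu i.le_succ)
    _ = μ (⋃ i ∈ Finset.range n, Ioc (u i) (u (i + 1))) :=
        (measure_biUnion_finset (hu.pairwise_disjoint_on_Ioc_succ.set_pairwise _)
          fun _ _ ↦ measurableSet_Ioc).symm
    _ ≤ μ s := measure_mono <| iUnion₂_subset fun i _ ↦
        Ioc_subset_Icc_self.trans (s.Icc_subset (hus i) (hus (i + 1)))

section PiecewiseC1

variable {E : Type*} [NormedAddCommGroup E] [NormedSpace ℝ E] {γ σ : ℝ → E} {a b c : ℝ}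

theorem intervalIntegrable_deriv_of_contDiffOn_Icc (h : ContDiffOn ℝ 1 γ (Icc a b)) (hab : a < b) :
    IntervalIntegrable (deriv γ) volume a b := by
  refine ((h.continuousOn_derivWithin (uniqueDiffOn_Icc hab) le_rfl).intervalIntegrable_of_Icc
    hab.le).congr_uIoo fun t ht ↦ ?_
  rw [uIoo_of_le hab.le] at ht
  exact derivWithin_of_mem_nhds (Icc_mem_nhds ht.1 ht.2)

theorem integral_norm_deriv_congr_Icc (h : EqOn γ σ (Icc a b)) (hab : a ≤ b) :
    ∫ t in a..b, ‖deriv γ t‖ = ∫ t in a..b, ‖deriv σ t‖ := by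
  refine intervalIntegral.integral_congr_uIoo fun t ht ↦ ?_
  rw [uIoo_of_le hab] at ht
  simp only [(h.mono Ioo_subset_Icc_self).deriv isOpen_Ioo ht]

theorem eVariationOn_le_ofReal_integral_of_contDiffOn_Icc (h : ContDiffOn ℝ 1 γ (Icc a b))
    (hab : a < b) :
    eVariationOn γ (Icc a b) ≤ ENNReal.ofReal (∫ t in a..b, ‖deriv γ t‖) := by
  have hint := (intervalIntegrable_iff_integrableOn_Icc_of_le hab.le).1
    (intervalIntegrable_deriv_of_contDiffOn_Icc h hab)
  rw [intervalIntegral.integral_of_le hab.le, ← integral_Icc_eq_integral_Ioc,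
    ofReal_integral_norm_eq_lintegral_enorm hint, ← withDensity_apply _ measurableSet_Icc]
  refine eVariationOn_le_measure fun s hs t ht hst ↦ ?_
  rw [withDensity_apply _ measurableSet_Ioc, restrict_Ioc_eq_restrict_Icc, edist_comm,
    edist_eq_enorm_sub]
  exact enorm_sub_le_lintegral_deriv_of_contDiffOn_Icc (h.mono (Icc_subset_Icc hs.1 ht.2)) hst

theorem piecewiseC1On_iff_reflTransGen :
    PiecewiseC1On γ a b ↔
      Relation.ReflTransGen (fun s t ↦ s < t ∧ ContDiffOn ℝ 1 γ (Icc s t)) a b := by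
  constructor
  · rintro ⟨n, t, rfl, rfl, hlt, hγ⟩
    exact (reflTransGen_of_succ_of_le (fun i j ↦ t i < t j ∧ ContDiffOn ℝ 1 γ (Icc (t i) (t j)))
      (fun i hi ↦ ⟨hlt i hi.2, hγ i hi.2⟩) n.zero_le).lift t fun _ _ ↦ id
  · intro h
    induction h using Relation.ReflTransGen.head_induction_on with
    | refl => exact ⟨0, fun _ ↦ b, by simp⟩
    | @head s _ hs _ ih =>
      obtain ⟨n, t, rfl, rfl, hlt, hγ⟩ := ih
      refine ⟨n + 1, fun | 0 => s | i + 1 => t i, rfl, rfl, ?_, ?_⟩ <;> rintro (_ | i) hi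
      exacts [hs.1, hlt i (by omega), hs.2, hγ i (by omega)]

namespace PiecewiseC1On

variable (γ a) in
theorem refl : PiecewiseC1On γ a a :=
  piecewiseC1On_iff_reflTransGen.2 .refl

theorem of_contDiffOn (h : ContDiffOn ℝ 1 γ (Icc a b)) (hab : a < b) : PiecewiseC1On γ a b :=
  piecewiseC1On_iff_reflTransGen.2 (.single ⟨hab, h⟩)

theorem trans (hab : PiecewiseC1On γ a b) (hbc : PiecewiseC1On γ b c) : PiecewiseC1On γ a c := by
  rw [piecewiseC1On_iff_reflTransGen] at *
  exact hab.trans hbc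

@[elab_as_elim]
theorem induction_on {motive : ∀ b, PiecewiseC1On γ a b → Prop} (h : PiecewiseC1On γ a b)
    (refl : motive a (.refl γ a))
    (tail : ∀ b c (hb : PiecewiseC1On γ a b) (hbc : b < c) (hγ : ContDiffOn ℝ 1 γ (Icc b c)),
      motive b hb → motive c (hb.trans (.of_contDiffOn hγ hbc))) :
    motive b h := by
  have h' := piecewiseC1On_iff_reflTransGen.1 h
  induction h' with
  | refl => exact refl
  | tail hb hbc ih =>
    exact tail _ _ (piecewiseC1On_iff_reflTransGen.2 hb) hbc.1 hbc.2 (ih _)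

theorem le (h : PiecewiseC1On γ a b) : a ≤ b := by
  induction h using PiecewiseC1On.induction_on with
  | refl => exact le_rfl
  | tail b c _ hbc _ hab => exact hab.trans hbc.le

theorem congr (h : PiecewiseC1On γ a b) (heq : EqOn σ γ (Icc a b)) : PiecewiseC1On σ a b := by
  induction h using PiecewiseC1On.induction_on with
  | refl => exact .refl σ a
  | tail b c hab hbc hγ ih =>
    exact (ih (heq.mono (Icc_subset_Icc_right hbc.le))).trans
      (.of_contDiffOn (hγ.congr (heq.mono (Icc_subset_Icc_left hab.le))) hbc)

theorem comp_add_const (h : PiecewiseC1On γ a b) (d : ℝ) :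
    PiecewiseC1On (fun t ↦ γ (t + d)) (a - d) (b - d) := by
  induction h using PiecewiseC1On.induction_on with
  | refl => exact .refl _ _
  | tail b c _ hbc hγ ih =>
    refine ih.trans (.of_contDiffOn (hγ.comp (by fun_prop) fun t ht ↦ ?_) (by linarith))
    exact ⟨by linarith [ht.1], by linarith [ht.2]⟩

theorem continuousOn (h : PiecewiseC1On γ a b) : ContinuousOn γ (Icc a b) := by
  induction h using PiecewiseC1On.induction_on with
  | refl => simp
  | tail b c hab hbc hγ ih =>
    rw [← Icc_union_Icc_eq_Icc hab.le hbc.le]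
    exact ih.union_of_isClosed hγ.continuousOn isClosed_Icc isClosed_Icc

theorem intervalIntegrable_deriv (h : PiecewiseC1On γ a b) :
    IntervalIntegrable (deriv γ) volume a b := by
  induction h using PiecewiseC1On.induction_on with
  | refl => exact .refl
  | tail b c _ hbc hγ ih => exact ih.trans (intervalIntegrable_deriv_of_contDiffOn_Icc hγ hbc)

theorem ofReal_integral_norm_deriv_add (hab : PiecewiseC1On γ a b) (hbc : PiecewiseC1On γ b c) :
    ENNReal.ofReal (∫ t in a..b, ‖deriv γ t‖) + ENNReal.ofReal (∫ t in b..c, ‖deriv γ t‖) =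
      ENNReal.ofReal (∫ t in a..c, ‖deriv γ t‖) := by
  rw [← ENNReal.ofReal_add (intervalIntegral.integral_nonneg hab.le fun _ _ ↦ norm_nonneg _)
      (intervalIntegral.integral_nonneg hbc.le fun _ _ ↦ norm_nonneg _),
    intervalIntegral.integral_add_adjacent_intervals hab.intervalIntegrable_deriv.norm
      hbc.intervalIntegrable_deriv.norm]

theorem eVariationOn_le (h : PiecewiseC1On γ a b) :
    eVariationOn γ (Icc a b) ≤ ENNReal.ofReal (∫ t in a..b, ‖deriv γ t‖) := by
  induction h using PiecewiseC1On.induction_on with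
  | refl => simp [eVariationOn.subsingleton]
  | tail b c hab hbc hγ ih =>
    have hadd := eVariationOn.Icc_add_Icc γ hab.le hbc.le (mem_univ b)
    simp only [univ_inter] at hadd
    rw [← hadd, ← hab.ofReal_integral_norm_deriv_add (.of_contDiffOn hγ hbc)]
    exact add_le_add ih (eVariationOn_le_ofReal_integral_of_contDiffOn_Icc hγ hbc)

theorem exists_concat (hγ : PiecewiseC1On γ a b) (hσ : PiecewiseC1On σ b c) (hb : γ b = σ b) :
    ∃ τ, PiecewiseC1On τ a c ∧ EqOn τ γ (Icc a b) ∧ EqOn τ σ (Icc b c) := by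
  let τ := fun t ↦ if t ≤ b then γ t else σ t
  have hτγ : EqOn τ γ (Icc a b) := fun t ht ↦ if_pos ht.2
  have hτσ : EqOn τ σ (Icc b c) := fun t ht ↦ by
    rcases ht.1.eq_or_lt with rfl | hbt
    exacts [(if_pos le_rfl).trans hb, if_neg hbt.not_ge]
  exact ⟨τ, (hγ.congr hτγ).trans (hσ.congr hτσ), hτγ, hτσ⟩

end PiecewiseC1On

end PiecewiseC1

section PathEDist

/-- The length metric of `S`: the infimum of the lengths of the continuous paths in `S` from `x` to
`y`, parametrized by `[0, 1]`. -/
noncomputable def lengthEDist {E : Type*} [PseudoEMetricSpace E] (S : Set E) (x y : E) : ℝ≥0∞ :=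
  ⨅ (γ : ℝ → E) (_ : ContinuousOn γ (Icc 0 1)) (_ : ∀ t ∈ Icc (0 : ℝ) 1, γ t ∈ S)
    (_ : γ 0 = x) (_ : γ 1 = y), eVariationOn γ (Icc 0 1)

theorem lengthEDist_le_eVariationOn {E : Type*} [PseudoEMetricSpace E] {S : Set E} {γ : ℝ → E}
    {a b : ℝ} (hγ : ContinuousOn γ (Icc a b)) (hS : ∀ t ∈ Icc a b, γ t ∈ S) (hab : a ≤ b) :
    lengthEDist S (γ a) (γ b) ≤ eVariationOn γ (Icc a b) := by
  have hmono : Monotone (AffineMap.lineMap a b : ℝ → ℝ) := AffineMap.lineMap_mono hab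
  have hmaps : MapsTo (AffineMap.lineMap a b : ℝ → ℝ) (Icc 0 1) (Icc a b) := by
    simpa using hmono.mapsTo_Icc (a := 0) (b := 1)
  refine le_trans ?_ (eVariationOn.comp_le_of_monotoneOn γ _ (hmono.monotoneOn _) hmaps)
  exact iInf_le_of_le _ <| iInf_le_of_le (hγ.comp AffineMap.lineMap_continuous.continuousOn hmaps)
    <| iInf_le_of_le (fun t ht ↦ hS _ (hmaps ht)) <| iInf_le_of_le (by simp) <|
    iInf_le_of_le (by simp) le_rfl

variable {E : Type*} [NormedAddCommGroup E] [NormedSpace ℝ E] {γ σ : ℝ → E} {a b c : ℝ} {S : Set E}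
  {x y : E}

/-- The Riemannian pseudometric of `S`: the infimum of `∫ ‖γ'‖` over the piecewise `C¹` paths `γ` in
`S` from `x` to `y`. The junk value of `deriv γ` at the finitely many corners of `γ` does
not affect the integral. -/
noncomputable def piecewiseC1EDist (S : Set E) (x y : E) : ℝ≥0∞ :=
  ⨅ (a : ℝ) (b : ℝ) (γ : ℝ → E) (_ : PiecewiseC1On γ a b) (_ : ∀ t ∈ Icc a b, γ t ∈ S)
    (_ : γ a = x) (_ : γ b = y), ENNReal.ofReal (∫ t in a..b, ‖deriv γ t‖)

theorem piecewiseC1EDist_le (h : PiecewiseC1On γ a b) (hS : ∀ t ∈ Icc a b, γ t ∈ S) :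
    piecewiseC1EDist S (γ a) (γ b) ≤ ENNReal.ofReal (∫ t in a..b, ‖deriv γ t‖) :=
  iInf_le_of_le a <| iInf_le_of_le b <| iInf_le_of_le γ <| iInf_le_of_le h <| iInf_le_of_le hS <|
    iInf_le_of_le rfl <| iInf_le_of_le rfl le_rfl

theorem lengthEDist_le_piecewiseC1EDist : lengthEDist S x y ≤ piecewiseC1EDist S x y := by
  refine le_iInf fun a ↦ le_iInf fun b ↦ le_iInf fun γ ↦ le_iInf fun hγ ↦ le_iInf fun hS ↦
    le_iInf fun ha ↦ le_iInf fun hb ↦ ?_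
  rw [← ha, ← hb]
  exact (lengthEDist_le_eVariationOn hγ.continuousOn hS hγ.le).trans hγ.eVariationOn_le

theorem piecewiseC1EDist_self (hx : x ∈ S) : piecewiseC1EDist S x x = 0 := by
  simpa using piecewiseC1EDist_le (γ := fun _ ↦ x) (.refl _ (0 : ℝ)) fun _ _ ↦ hx

theorem piecewiseC1EDist_le_add (hγ : PiecewiseC1On γ a b) (hσ : PiecewiseC1On σ b c)
    (hb : γ b = σ b) (hγS : ∀ t ∈ Icc a b, γ t ∈ S) (hσS : ∀ t ∈ Icc b c, σ t ∈ S) :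
    piecewiseC1EDist S (γ a) (σ c) ≤
      ENNReal.ofReal (∫ t in a..b, ‖deriv γ t‖) + ENNReal.ofReal (∫ t in b..c, ‖deriv σ t‖) := by
  obtain ⟨τ, hτ, hτγ, hτσ⟩ := hγ.exists_concat hσ hb
  have hτS : ∀ t ∈ Icc a c, τ t ∈ S := fun t ht ↦ by
    rcases le_total t b with htb | hbt
    · exact hτγ ⟨ht.1, htb⟩ ▸ hγS t ⟨ht.1, htb⟩
    · exact hτσ ⟨hbt, ht.2⟩ ▸ hσS t ⟨hbt, ht.2⟩
  rw [← hτγ ⟨le_rfl, hγ.le⟩, ← hτσ ⟨hσ.le, le_rfl⟩,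
    ← integral_norm_deriv_congr_Icc hτγ hγ.le, ← integral_norm_deriv_congr_Icc hτσ hσ.le,
    (hγ.congr hτγ).ofReal_integral_norm_deriv_add (hσ.congr hτσ)]
  exact piecewiseC1EDist_le hτ hτS

theorem piecewiseC1EDist_triangle (S : Set E) (x y z : E) :
    piecewiseC1EDist S x z ≤ piecewiseC1EDist S x y + piecewiseC1EDist S y z := by
  rw [piecewiseC1EDist.eq_def S x y, piecewiseC1EDist.eq_def S y z]
  simp only [ENNReal.iInf_add, ENNReal.add_iInf, le_iInf_iff]
  intro b' c σ hσ hσS hσy hσz a b γ hγ hγS hγx hγy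
  have hσ' := hσ.comp_add_const (b' - b)
  rw [sub_sub_cancel] at hσ'
  have hle := piecewiseC1EDist_le_add hγ hσ' (by simp [hγy, hσy]) hγS fun t ht ↦
    hσS _ ⟨by linarith [ht.1], by linarith [ht.2]⟩
  simpa [hγx, hσz, deriv_comp_add_const,
    intervalIntegral.integral_comp_add_right (fun t ↦ ‖deriv σ t‖)] using hle

theorem piecewiseC1EDist_le_sum {u : ℕ → E} (hu : ∀ i, u i ∈ S) (n : ℕ) :
    piecewiseC1EDist S (u 0) (u n) ≤
      ∑ i ∈ Finset.range n, piecewiseC1EDist S (u i) (u (i + 1)) := by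
  induction n with
  | zero => simp [piecewiseC1EDist_self (hu 0)]
  | succ n ih =>
    rw [Finset.sum_range_succ]
    exact (piecewiseC1EDist_triangle S _ (u n) _).trans (by gcongr)

theorem mul_piecewiseC1EDist_le_lengthEDist {c : ℝ≥0∞} {δ : ℝ} (hδ : 0 < δ)
    (h : ∀ p ∈ S, ∀ q ∈ S, dist p q < δ → c * piecewiseC1EDist S p q ≤ edist p q) :
    c * piecewiseC1EDist S x y ≤ lengthEDist S x y := by
  refine le_iInf fun γ ↦ le_iInf fun hγ ↦ le_iInf fun hS ↦ le_iInf fun hx ↦ le_iInf fun hy ↦ ?_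
  obtain ⟨t, ht0, ht, ⟨n, htn⟩, hcover⟩ := exists_monotone_Icc_subset_open_cover_Icc zero_le_one
    (c := fun p : E ↦ {s | dist (γ s) p < δ / 2})
    (fun p ↦ isOpen_lt (hγ.domRestrict.dist continuous_const) continuous_const)
    fun s _ ↦ mem_iUnion.2 ⟨γ s, by simpa using hδ⟩
  have hclose (i : ℕ) : dist (γ (t i)) (γ (t (i + 1))) < δ := by
    obtain ⟨p, hp⟩ := hcover i
    calc dist (γ (t i)) (γ (t (i + 1))) ≤ dist (γ (t i)) p + dist (γ (t (i + 1))) p :=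
          dist_triangle_right _ _ _
      _ < δ / 2 + δ / 2 := add_lt_add (hp ⟨le_rfl, ht i.le_succ⟩) (hp ⟨ht i.le_succ, le_rfl⟩)
      _ = δ := add_halves δ
  calc c * piecewiseC1EDist S x y
      = c * piecewiseC1EDist S (γ (t 0)) (γ (t n)) := by rw [ht0, htn n le_rfl, hx, hy]
    _ ≤ c * ∑ i ∈ Finset.range n, piecewiseC1EDist S (γ (t i)) (γ (t (i + 1))) := by
        gcongr
        exact piecewiseC1EDist_le_sum (u := fun i ↦ γ (t i)) (fun i ↦ hS _ (t i).2) n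
    _ = ∑ i ∈ Finset.range n, c * piecewiseC1EDist S (γ (t i)) (γ (t (i + 1))) := Finset.mul_sum ..
    _ ≤ ∑ i ∈ Finset.range n, edist (γ (t (i + 1))) (γ (t i)) := by
        gcongr with i
        exact (h _ (hS _ (t i).2) _ (hS _ (t (i + 1)).2) (hclose i)).trans_eq (edist_comm ..)
    _ ≤ eVariationOn γ (Icc 0 1) := eVariationOn.sum_le (u := fun i ↦ (t i : ℝ)) ht fun i ↦ (t i).2

theorem lengthEDist_eq_piecewiseC1EDist
    (h : ∀ c < (1 : ℝ≥0∞), ∃ δ > 0, ∀ p ∈ S, ∀ q ∈ S, dist p q < δ →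
      c * piecewiseC1EDist S p q ≤ edist p q) :
    lengthEDist S x y = piecewiseC1EDist S x y := by
  refine lengthEDist_le_piecewiseC1EDist.antisymm ?_
  refine ENNReal.le_of_forall_lt_one_mul_le fun c hc ↦ ?_
  obtain ⟨δ, hδ, h⟩ := h c hc
  exact mul_piecewiseC1EDist_le_lengthEDist hδ h

end PathEDist

theorem two_mul_arcsin_half {d : ℝ} (hd₀ : 0 ≤ d) (hd₂ : d ≤ 2) :
    2 * Real.arcsin (d / 2) = Real.arccos (1 - d ^ 2 / 2) := by
  refine (Real.arccos_eq_of_eq_cos ?_ ?_ ?_).symm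
  · linarith [Real.arcsin_nonneg.2 (div_nonneg hd₀ zero_le_two)]
  · linarith [Real.arcsin_le_pi_div_two (d / 2)]
  · rw [Real.cos_two_mul, Real.cos_sq', Real.sin_arcsin (by linarith) (by linarith)]
    ring

theorem mul_arcsin_le {c d : ℝ} (hd₀ : 0 ≤ d) (hd : d < √(1 - c ^ 2)) :
    c * Real.arcsin d ≤ d := by
  have hcd : d ^ 2 < 1 - c ^ 2 := (Real.lt_sqrt hd₀).1 hd
  have hd₁ : 0 < 1 - d ^ 2 := by linarith [sq_nonneg c]
  calc c * Real.arcsin d ≤ √(1 - d ^ 2) * Real.tan (Real.arcsin d) := by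
        gcongr
        · exact Real.arcsin_nonneg.2 hd₀
        · exact Real.le_sqrt_of_sq_le (by linarith)
        · exact Real.le_tan (Real.arcsin_nonneg.2 hd₀)
            (Real.arcsin_lt_pi_div_two.2 ((sq_lt_one_iff₀ hd₀).1 (sub_pos.1 hd₁)))
    _ = d := by rw [Real.tan_arcsin, mul_div_cancel₀ _ (Real.sqrt_pos.2 hd₁).ne']

theorem isStarProjection_half_one_add {A : Type*} [Ring A] [StarRing A] [Algebra ℝ A]
    [StarModule ℝ A] {s : unitary A} (hs : IsSelfAdjoint s) :
    IsStarProjection ((2⁻¹ : ℝ) • (1 + (s : A))) where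
  isIdempotentElem := by
    have hss : (s : A) * s = 1 := by
      simpa [← Unitary.coe_star, hs.star_eq] using Unitary.coe_star_mul_self s
    rw [IsIdempotentElem, smul_mul_smul_comm, mul_add, add_mul, add_mul, hss]
    simp only [mul_one, one_mul]
    module
  isSelfAdjoint :=
    (IsSelfAdjoint.all _).smul ((IsSelfAdjoint.one A).add (congrArg Subtype.val hs))

section CStarAlgebra

open Complex selfAdjoint NormedSpace
open scoped Real

variable {A : Type*} [CStarAlgebra A]

theorem star_expUnitary (h : selfAdjoint A) : star (expUnitary h) = expUnitary (-h) := by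
  rw [Unitary.star_eq_inv, inv_eq_iff_mul_eq_one,
    ← Commute.expUnitary_add (.neg_right (.refl (h : A))), add_neg_cancel, expUnitary_zero]

theorem semiconjBy_expUnitary {a : A} {h k : selfAdjoint A} (hhk : SemiconjBy a (h : A) k) :
    SemiconjBy a (expUnitary h : A) (expUnitary k) := by
  let +nondep : NormedAlgebra ℚ A := .restrictScalars ℚ ℂ A
  exact SemiconjBy.exp_right (by simpa [SemiconjBy] using congrArg (I • ·) hhk.eq)

theorem semiconjBy_of_expUnitary {s : unitary A} {h k : selfAdjoint A} (hh : ‖h‖ < π)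
    (hk : ‖k‖ < π) (hhk : SemiconjBy (s : A) (expUnitary h : A) (expUnitary k)) :
    SemiconjBy (s : A) (h : A) k := by
  let h' : selfAdjoint A := ⟨s * h * star (s : A), h.2.conjugate _⟩
  have hsh : SemiconjBy (s : A) (h : A) h' := by simp [SemiconjBy, h', mul_assoc]
  have hh' : ‖h'‖ < π := by
    change ‖(s : A) * h * (star s : unitary A)‖ < π
    rwa [CStarRing.norm_mul_coe_unitary, CStarRing.norm_coe_unitary_mul]
  have hexp : expUnitary h' = expUnitary k :=
    Subtype.ext <| (Unitary.mul_left_inj s).1 <| (semiconjBy_expUnitary hsh).eq.symm.trans hhk.eq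
  have hh'k : h' = k := by
    rw [← argSelfAdjoint_expUnitary hh', hexp, argSelfAdjoint_expUnitary hk]
  exact hh'k ▸ hsh

theorem exists_expUnitary_mul_eq {s r : unitary A} (hs : IsSelfAdjoint s) (hr : IsSelfAdjoint r)
    (hrs : ‖(r - s : A)‖ < 2) :
    ∃ h : selfAdjoint A, SemiconjBy (s : A) (h : A) ((-h : selfAdjoint A) : A) ∧
      expUnitary h * s = r ∧ ‖h‖ = 2 * Real.arcsin (‖(r - s : A)‖ / 2) := by
  have hdist : ‖(r - s : A)‖ = ‖((r * s : unitary A) - 1 : A)‖ := by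
    rw [Unitary.norm_sub_eq, hs.star_eq]
  rw [hdist] at hrs ⊢
  have hexp := expUnitary_argSelfAdjoint hrs
  have hnorm := Unitary.norm_argSelfAdjoint hrs
  rw [← two_mul_arcsin_half (norm_nonneg _) hrs.le] at hnorm
  have hlt : ‖Unitary.argSelfAdjoint (r * s)‖ < π := by
    linarith [Real.arcsin_lt_pi_div_two.2 ((div_lt_one two_pos).2 hrs)]
  refine ⟨Unitary.argSelfAdjoint (r * s), semiconjBy_of_expUnitary hlt (by rwa [norm_neg]) ?_, ?_,
    hnorm⟩
  · rw [← star_expUnitary, hexp, star_mul, hs.star_eq, hr.star_eq]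
    exact (mul_assoc (s : A) r s).symm
  · rw [hexp, mul_assoc]
    nth_rw 1 [← hs.star_eq]
    rw [Unitary.star_mul_self, mul_one]

/-- The path of projections with reflections `2 * e - 1 = exp (i t h) s`. When `s` is a symmetry and
`s h s = -h`, it is a geodesic issuing from the projection `(1 + s) / 2`. -/
noncomputable def reflectionGeodesic (s : unitary A) (h : selfAdjoint A) (t : ℝ) : A :=
  (2⁻¹ : ℝ) • (1 + (expUnitary (t • h) * s : unitary A))

variable {s : unitary A} {h : selfAdjoint A}

theorem isStarProjection_reflectionGeodesic (hs : IsSelfAdjoint s)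
    (hsh : SemiconjBy (s : A) (h : A) ((-h : selfAdjoint A) : A)) (t : ℝ) :
    IsStarProjection (reflectionGeodesic s h t) := by
  refine isStarProjection_half_one_add ?_
  have hst : SemiconjBy (s : A) ((-(t • h) : selfAdjoint A) : A) ((t • h : selfAdjoint A) : A) := by
    simpa [SemiconjBy] using congrArg (-t • ·) hsh.eq
  rw [IsSelfAdjoint, star_mul, hs.star_eq, star_expUnitary]
  exact Subtype.ext (semiconjBy_expUnitary hst).eq

theorem hasDerivAt_reflectionGeodesic (s : unitary A) (h : selfAdjoint A) (t : ℝ) :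
    HasDerivAt (reflectionGeodesic s h)
      ((2⁻¹ : ℝ) • (I • (h : A) * (expUnitary (t • h) * s : unitary A))) t := by
  have hexp := hasDerivAt_exp_smul_const' (I • (h : A)) t
  have h2 := ((hexp.mul_const (s : A)).const_add 1).const_smul (2⁻¹ : ℝ)
  simp only [smul_comm _ I, mul_assoc] at h2
  exact h2

theorem contDiff_reflectionGeodesic (s : unitary A) (h : selfAdjoint A) :
    ContDiff ℝ 1 (reflectionGeodesic s h) := by
  rw [contDiff_one_iff_deriv, funext fun t ↦ (hasDerivAt_reflectionGeodesic s h t).deriv]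
  have : Continuous fun t : ℝ ↦ expUnitary (t • h) * s :=
    (continuous_expUnitary.comp (by fun_prop)).mul_const s
  exact ⟨fun t ↦ (hasDerivAt_reflectionGeodesic s h t).differentiableAt,
   (continuous_const.mul (continuous_subtype_val.comp this)).const_smul _⟩

theorem norm_deriv_reflectionGeodesic (s : unitary A) (h : selfAdjoint A) (t : ℝ) :
    ‖deriv (reflectionGeodesic s h) t‖ = ‖h‖ / 2 := by
  rw [(hasDerivAt_reflectionGeodesic s h t).deriv, norm_smul, CStarRing.norm_mul_coe_unitary,
    norm_smul]
  simp [div_eq_inv_mul]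

theorem piecewiseC1EDist_isStarProjection_le_arcsin {p q : A} (hp : IsStarProjection p)
    (hq : IsStarProjection q) (hpq : ‖p - q‖ < 1) :
    piecewiseC1EDist {e : A | IsStarProjection e} p q ≤
      ENNReal.ofReal (Real.arcsin ‖p - q‖) := by
  let s : unitary A := ⟨2 * p - 1, hp.two_mul_sub_one_mem_unitary⟩
  let r : unitary A := ⟨2 * q - 1, hq.two_mul_sub_one_mem_unitary⟩
  have hs : IsSelfAdjoint s := Subtype.ext (by simp [s, hp.isSelfAdjoint.star_eq, two_mul])
  have hr : IsSelfAdjoint r := Subtype.ext (by simp [r, hq.isSelfAdjoint.star_eq, two_mul])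
  have hdist : ‖(r - s : A)‖ = 2 * ‖p - q‖ := by
    have : (r - s : A) = (2 : ℝ) • (q - p) := by
      rw [two_smul]
      simp only [r, s]
      noncomm_ring
    rw [this, norm_smul, norm_sub_rev, Real.norm_two]
  obtain ⟨h, hsh, hexp, hnorm⟩ := exists_expUnitary_mul_eq hs hr (by linarith)
  have h0 : reflectionGeodesic s h 0 = p := by
    simp [reflectionGeodesic, s, two_mul, ← two_smul ℝ p]
  have h1 : reflectionGeodesic s h 1 = q := by
    simp [reflectionGeodesic, hexp, r, two_mul, ← two_smul ℝ q]
  calc piecewiseC1EDist {e : A | IsStarProjection e} p q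
      ≤ ENNReal.ofReal (∫ t in (0 : ℝ)..1, ‖deriv (reflectionGeodesic s h) t‖) := by
        rw [← h0, ← h1]
        exact piecewiseC1EDist_le (.of_contDiffOn (contDiff_reflectionGeodesic s h).contDiffOn
          one_pos) fun t _ ↦ isStarProjection_reflectionGeodesic hs hsh t
    _ = ENNReal.ofReal (Real.arcsin ‖p - q‖) := by
        simp [norm_deriv_reflectionGeodesic, hnorm, hdist]

theorem projLengthMetric_eq_riemannian_general (p q : A) :
    lengthEDist {e : A | IsStarProjection e} p q =
      piecewiseC1EDist {e : A | IsStarProjection e} p q := by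
  refine lengthEDist_eq_piecewiseC1EDist fun c hc ↦ ?_
  lift c to NNReal using hc.ne_top
  have hc1 : (c : ℝ) < 1 := by exact_mod_cast hc
  refine ⟨√(1 - c ^ 2), Real.sqrt_pos.2 (by nlinarith [c.2]), fun p hp q hq hpq ↦ ?_⟩
  rw [dist_eq_norm] at hpq
  have hlt : ‖p - q‖ < 1 := hpq.trans_le (Real.sqrt_le_one.2 (by nlinarith [c.2]))
  grw [piecewiseC1EDist_isStarProjection_le_arcsin hp hq hlt]
  rw [← ENNReal.ofReal_coe_nnreal, ← ENNReal.ofReal_mul c.coe_nonneg, edist_dist, dist_eq_norm]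
  exact ENNReal.ofReal_le_ofReal (mul_arcsin_le (norm_nonneg _) hpq)

end CStarAlgebra

theorem isOrthogonalProjection_iff_isStarProjection_s10 {H : Type*} [NormedAddCommGroup H]
    [InnerProductSpace ℂ H] [CompleteSpace H] {P : H →L[ℂ] H} :
    IsOrthogonalProjection P ↔ IsStarProjection P :=
  ⟨fun h ↦ ⟨h.2, h.1⟩, fun h ↦ ⟨h.isSelfAdjoint, h.isIdempotentElem⟩⟩

/-- The length metric `ρ` coincides with the Riemannian pseudometric: the
infimum of `∫_a^b ‖γ'(t)‖ dt` over all piecewise `C¹`-smooth paths `γ : [a,b] → 𝒫` joining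
`P` to `Q` (the infimum of the empty set being `∞`). -/
theorem projLengthMetric_eq_riemannian {H : Type*} [NormedAddCommGroup H]
    [InnerProductSpace ℂ H] [CompleteSpace H] [TopologicalSpace.SeparableSpace H]
    (P Q : H →L[ℂ] H)
    (hP : IsOrthogonalProjection P) (hQ : IsOrthogonalProjection Q) :
    projLengthMetric P Q =
      ⨅ (a : ℝ) (b : ℝ) (γ : ℝ → (H →L[ℂ] H)) (_ : PiecewiseC1On γ a b)
        (_ : ∀ t ∈ Set.Icc a b, IsOrthogonalProjection (γ t))
        (_ : γ a = P) (_ : γ b = Q),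
        ENNReal.ofReal (∫ t in a..b, ‖deriv γ t‖) := by
  simp only [projLengthMetric, isOrthogonalProjection_iff_isStarProjection_s10]
  exact projLengthMetric_eq_riemannian_general P Q
end
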